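/- arXiv:1707.07748 — 2 statements merged into one kernel-verified Lean document; each statement's English description precedes it below -/
import Mathlib

section
/- Let p > q be distinct primes and G₁ = {(x₁,y₁,z₁,x₂,y₂,z₂) ∈ G×G : q·x₁ = p·x₂ and q·y₁ = p·y₂}, Γ₁ = G₁ ∩ (Γ×Γ). Then D = {(0,0,z,0,0,z) : z ∈ ℝ} is a closed subgroup of G₁ contained in the center of G₁; the image of Γ₁ under the quotient homomorphism G₁ → G₁/D is a discrete subgroup of G₁/D; and the quotient of G₁/D by this image subgroup is compact. -/
set_option linter.unreachableTactic false
set_option linter.unusedTactic false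

noncomputable section
open Filter

/-- The generalized Heisenberg group: `ℝ³` with multiplication
`(x,y,z)·(x',y',z') = (x+x', y+y', z+z'+c(xy'−x'y))`.
The Heisenberg group `G` of the paper is `Heis 1`. -/
@[ext]
structure Heis (c : ℤ) where
  x : ℝ
  y : ℝ
  z : ℝ

namespace Heis
variable {c : ℤ}
instance : Mul (Heis c) :=
  ⟨fun a b => ⟨a.x + b.x, a.y + b.y, a.z + b.z + (c : ℝ) * (a.x * b.y - b.x * a.y)⟩⟩
instance : One (Heis c) := ⟨⟨0, 0, 0⟩⟩
instance : Inv (Heis c) := ⟨fun a => ⟨-a.x, -a.y, -a.z⟩⟩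
lemma mul_def (a b : Heis c) :
    a * b = ⟨a.x + b.x, a.y + b.y, a.z + b.z + (c : ℝ) * (a.x * b.y - b.x * a.y)⟩ := rfl
lemma one_def : (1 : Heis c) = ⟨0, 0, 0⟩ := rfl
lemma inv_def (a : Heis c) : a⁻¹ = ⟨-a.x, -a.y, -a.z⟩ := rfl
instance : Group (Heis c) where
  mul_assoc a b d := by ext <;> simp [mul_def] <;> ring
  one_mul a := by ext <;> simp [mul_def, one_def]
  mul_one a := by ext <;> simp [mul_def, one_def]
  inv_mul_cancel a := by ext <;> simp [mul_def, one_def, inv_def] <;> ring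
/-- The topology of `Heis c`, induced from `ℝ³`. -/
instance : TopologicalSpace (Heis c) :=
  TopologicalSpace.induced (fun a => (a.x, a.y, a.z)) inferInstance
/-- The lattice of integer points of `Heis c`  (the subgroup `Γ` when `c = 1`). -/
def latt (c : ℤ) : Subgroup (Heis c) where
  carrier := {a | ∃ m n k : ℤ, a = ⟨(m : ℝ), (n : ℝ), (k : ℝ)⟩}
  one_mem' := ⟨0, 0, 0, by ext <;> simp [one_def]⟩
  mul_mem' := by
    rintro a b ⟨m, n, k, rfl⟩ ⟨m', n', k', rfl⟩
    exact ⟨m + m', n + n', k + k' + c * (m * n' - m' * n), by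
      ext <;> simp [mul_def] <;> push_cast <;> ring⟩
  inv_mem' := by
    rintro a ⟨m, n, k, rfl⟩
    exact ⟨-m, -n, -k, by ext <;> simp [inv_def]⟩
end Heis

/-- The 3-dimensional Heisenberg nilmanifold `X = G/Γ` (the space of left cosets,
with the quotient topology). -/
abbrev HeisX : Type := Heis 1 ⧸ Heis.latt 1

/-- The circle `𝕋¹ = ℝ/ℤ`. -/
abbrev T1 : Type := AddCircle (1 : ℝ)

/-- The subgroup `G₁ = {(x₁,y₁,z₁,x₂,y₂,z₂) ∈ G×G : q(x₁,y₁) = p(x₂,y₂)}` of `G × G`. -/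
def HeisG1 (p q : ℕ) : Subgroup (Heis 1 × Heis 1) where
  carrier := {g | (q : ℝ) * g.1.x = (p : ℝ) * g.2.x ∧ (q : ℝ) * g.1.y = (p : ℝ) * g.2.y}
  one_mem' := by simp [Heis.one_def, Prod.fst_one, Prod.snd_one]
  mul_mem' := by
    rintro a b ⟨ha1, ha2⟩ ⟨hb1, hb2⟩
    constructor <;> simp only [Prod.fst_mul, Prod.snd_mul, Heis.mul_def] <;> ring_nf <;>
      nlinarith [ha1, ha2, hb1, hb2]
  inv_mem' := by
    rintro a ⟨ha1, ha2⟩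
    constructor <;> simp only [Prod.fst_inv, Prod.snd_inv, Heis.inv_def] <;> nlinarith [ha1, ha2]

/-- The subgroup `D = {(0,0,z,0,0,z) : z ∈ ℝ}` of `G₁`. -/
def HeisD (p q : ℕ) : Subgroup (HeisG1 p q) where
  carrier := {g | (g : Heis 1 × Heis 1).1.x = 0 ∧ (g : Heis 1 × Heis 1).1.y = 0 ∧
    (g : Heis 1 × Heis 1).2.x = 0 ∧ (g : Heis 1 × Heis 1).2.y = 0 ∧
    (g : Heis 1 × Heis 1).1.z = (g : Heis 1 × Heis 1).2.z}
  one_mem' := by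
    simp [Heis.one_def, Prod.fst_one, Prod.snd_one]
  mul_mem' := by
    rintro a b ⟨ha1, ha2, ha3, ha4, ha5⟩ ⟨hb1, hb2, hb3, hb4, hb5⟩
    refine ⟨?_, ?_, ?_, ?_, ?_⟩ <;>
      simp only [Subgroup.coe_mul, Prod.fst_mul, Prod.snd_mul, Heis.mul_def,
        ha1, ha2, ha3, ha4, ha5, hb1, hb2, hb3, hb4, hb5] <;> ring
  inv_mem' := by
    rintro a ⟨ha1, ha2, ha3, ha4, ha5⟩
    refine ⟨?_, ?_, ?_, ?_, ?_⟩ <;>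
      simp only [Subgroup.coe_inv, Prod.fst_inv, Prod.snd_inv, Heis.inv_def,
        ha1, ha2, ha3, ha4, ha5] <;> ring

instance (p q : ℕ) : (HeisD p q).Normal := by
  constructor
  intro n hn g
  obtain ⟨h1, h2, h3, h4, h5⟩ := hn
  refine ⟨?_, ?_, ?_, ?_, ?_⟩ <;>
    simp only [Subgroup.coe_mul, Subgroup.coe_inv, Prod.fst_mul, Prod.snd_mul,
      Prod.fst_inv, Prod.snd_inv, Heis.mul_def, Heis.inv_def, h1, h2, h3, h4, h5] <;> ring

lemma Heis.continuous_coords' {c : ℤ} :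
    Continuous (fun a : Heis c => ((a.x, a.y, a.z) : ℝ × ℝ × ℝ)) :=
  continuous_induced_dom

lemma Heis.continuous_x' {c : ℤ} : Continuous (fun a : Heis c => a.x) :=
  continuous_fst.comp (Heis.continuous_coords' (c := c))

lemma Heis.continuous_y' {c : ℤ} : Continuous (fun a : Heis c => a.y) :=
  continuous_fst.comp (continuous_snd.comp (Heis.continuous_coords' (c := c)))

lemma Heis.continuous_z' {c : ℤ} : Continuous (fun a : Heis c => a.z) :=
  continuous_snd.comp (continuous_snd.comp (Heis.continuous_coords' (c := c)))

/-- A coordinate function descends continuously to the quotient. -/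
lemma exists_lift_quot (p q : ℕ) (f : HeisG1 p q → ℝ) (hf : Continuous f)
    (h : ∀ a d, d ∈ HeisD p q → f (a * d) = f a) :
    ∃ F : HeisG1 p q ⧸ HeisD p q → ℝ, Continuous F ∧ ∀ a : HeisG1 p q,
      F (QuotientGroup.mk' (HeisD p q) a) = f a := by
  have key : ∀ a b : HeisG1 p q, (QuotientGroup.leftRel (HeisD p q)) a b → f a = f b := by
    intro a b hab
    rw [QuotientGroup.leftRel_apply] at hab
    have := h a _ hab
    rw [mul_inv_cancel_left] at this
    exact this.symm
  exact ⟨Quotient.lift f key, hf.quotient_lift key, fun a => rfl⟩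

/-- Parametrization of `G₁`. -/
def paramG1 (p q : ℕ) (s t u v : ℝ) : HeisG1 p q :=
  ⟨(⟨p * s, p * t, u⟩, ⟨q * s, q * t, v⟩), by
    constructor <;> simp only <;> ring⟩

lemma continuous_paramG1 (p q : ℕ) :
    Continuous (fun w : ℝ × ℝ × ℝ × ℝ => paramG1 p q w.1 w.2.1 w.2.2.1 w.2.2.2) := by
  refine Continuous.subtype_mk (Continuous.prodMk ?_ ?_) _
  · rw [continuous_induced_rng]
    simp only [Function.comp_def]
    fun_prop
  · rw [continuous_induced_rng]
    simp only [Function.comp_def]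
    fun_prop

lemma paramG1_mul (p q : ℕ) (s t u v s' t' u' v' : ℝ) :
    paramG1 p q s t u v * paramG1 p q s' t' u' v' =
      paramG1 p q (s + s') (t + t') (u + u' + p ^ 2 * (s * t' - s' * t))
        (v + v' + q ^ 2 * (s * t' - s' * t)) := by
  apply Subtype.ext
  apply Prod.ext <;> ext <;> simp [paramG1, Heis.mul_def] <;> ring

lemma paramG1_surj (p q : ℕ) (hp : p ≠ 0) (hq : q ≠ 0) (g : HeisG1 p q) :
    ∃ s t u v, g = paramG1 p q s t u v := by
  obtain ⟨⟨⟨a, b, c⟩, ⟨a', b', c'⟩⟩, h1, h2⟩ := g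
  have hp' : (p : ℝ) ≠ 0 := by exact_mod_cast hp
  have hq' : (q : ℝ) ≠ 0 := by exact_mod_cast hq
  simp only at h1 h2
  refine ⟨a / p, b / p, c, c', ?_⟩
  apply Subtype.ext
  apply Prod.ext <;> ext <;> simp [paramG1] <;> field_simp <;> linarith

lemma paramG1_mem (p q : ℕ) (m n k l : ℤ) :
    paramG1 p q m n k l ∈ ((Heis.latt 1).prod (Heis.latt 1)).subgroupOf (HeisG1 p q) := by
  rw [Subgroup.mem_subgroupOf]
  exact ⟨⟨p * m, p * n, k, by simp [paramG1]⟩, ⟨q * m, q * n, l, by simp [paramG1]⟩⟩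

/-- Every element of `G₁` can be moved by the lattice into the unit cube. -/
lemma paramG1_reduce (p q : ℕ) (s t u v : ℝ) :
    ∃ γ ∈ ((Heis.latt 1).prod (Heis.latt 1)).subgroupOf (HeisG1 p q),
    ∃ s' ∈ Set.Icc (0 : ℝ) 1, ∃ t' ∈ Set.Icc (0 : ℝ) 1, ∃ u' ∈ Set.Icc (0 : ℝ) 1,
    ∃ v' ∈ Set.Icc (0 : ℝ) 1, paramG1 p q s t u v * γ = paramG1 p q s' t' u' v' := by
  have hfr : ∀ r : ℝ, Int.fract r ∈ Set.Icc (0 : ℝ) 1 := fun r =>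
    ⟨Int.fract_nonneg r, (Int.fract_lt_one r).le⟩
  set e : ℝ := s * ((-⌊t⌋ : ℤ) : ℝ) - ((-⌊s⌋ : ℤ) : ℝ) * t with he
  refine ⟨_, paramG1_mem p q (-⌊s⌋) (-⌊t⌋) (-⌊u + p ^ 2 * e⌋) (-⌊v + q ^ 2 * e⌋),
    _, hfr s, _, hfr t, _, hfr (u + p ^ 2 * e), _, hfr (v + q ^ 2 * e), ?_⟩
  rw [paramG1_mul, ← he]
  congr 1 <;> rw [← Int.self_sub_floor] <;> push_cast <;> ring

/-- `D = {(0,0,z,0,0,z) : z ∈ ℝ}` is a closed subgroup of `G₁` contained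
in the center of `G₁`; the image of `Γ₁ = G₁ ∩ (Γ×Γ)` under the quotient homomorphism
`G₁ → G₁/D` is discrete, and the quotient of `G₁/D` by this image is compact. -/
theorem stmt5 (p q : ℕ) (hp : p.Prime) (hq : q.Prime) (hpq : q < p) :
    IsClosed ((HeisD p q : Subgroup (HeisG1 p q)) : Set (HeisG1 p q)) ∧
    HeisD p q ≤ Subgroup.center (HeisG1 p q) ∧
    DiscreteTopology
      (Subgroup.map (QuotientGroup.mk' (HeisD p q))
        (((Heis.latt 1).prod (Heis.latt 1)).subgroupOf (HeisG1 p q))) ∧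
    CompactSpace
      ((HeisG1 p q ⧸ HeisD p q) ⧸
        Subgroup.map (QuotientGroup.mk' (HeisD p q))
          (((Heis.latt 1).prod (Heis.latt 1)).subgroupOf (HeisG1 p q))) := by
  have c1 : Continuous (fun g : HeisG1 p q => (g : Heis 1 × Heis 1).1) :=
    continuous_fst.comp continuous_subtype_val
  have c2 : Continuous (fun g : HeisG1 p q => (g : Heis 1 × Heis 1).2) :=
    continuous_snd.comp continuous_subtype_val
  have cx1 := Heis.continuous_x'.comp c1
  have cy1 := Heis.continuous_y'.comp c1
  have cz1 := Heis.continuous_z'.comp c1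
  have cx2 := Heis.continuous_x'.comp c2
  have cy2 := Heis.continuous_y'.comp c2
  have cz2 := Heis.continuous_z'.comp c2
  have hq0 : (q : ℝ) ≠ 0 := by exact_mod_cast hq.ne_zero
  refine ⟨?_, ?_, ?_, ?_⟩
  · exact (isClosed_eq cx1 continuous_const).inter ((isClosed_eq cy1 continuous_const).inter
      ((isClosed_eq cx2 continuous_const).inter ((isClosed_eq cy2 continuous_const).inter
        (isClosed_eq cz1 cz2))))
  · rintro d ⟨h1, h2, h3, h4, h5⟩
    rw [Subgroup.mem_center_iff]
    intro g
    apply Subtype.ext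
    apply Prod.ext <;> ext <;> simp [Heis.mul_def, h1, h2, h3, h4] <;> ring
  · obtain ⟨X, cX, hX⟩ := exists_lift_quot p q _ cx2 (by
      rintro a d ⟨h1, h2, h3, h4, h5⟩
      simp [Heis.mul_def, h1, h2, h3, h4])
    obtain ⟨Y, cY, hY⟩ := exists_lift_quot p q _ cy2 (by
      rintro a d ⟨h1, h2, h3, h4, h5⟩
      simp [Heis.mul_def, h1, h2, h3, h4])
    obtain ⟨Z, cZ, hZ⟩ := exists_lift_quot p q _ (cz1.sub cz2) (by
      rintro a d ⟨h1, h2, h3, h4, h5⟩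
      simp [Heis.mul_def, h1, h2, h3, h4, h5])
    simp only [Function.comp_apply] at hX hY hZ
    set L := Subgroup.map (QuotientGroup.mk' (HeisD p q))
        (((Heis.latt 1).prod (Heis.latt 1)).subgroupOf (HeisG1 p q)) with hL
    have hint : ∀ w : L, (∃ m : ℤ, X w = m) ∧ (∃ m : ℤ, Y w = m) ∧ (∃ m : ℤ, Z w = m) := by
      rintro ⟨_, g, ⟨⟨m, n, k, h⟩, ⟨m', n', k', h'⟩⟩, rfl⟩
      simp only [hX, hY, hZ]
      refine ⟨⟨m', ?_⟩, ⟨n', ?_⟩, ⟨k - k', ?_⟩⟩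
      · exact congrArg Heis.x h'
      · exact congrArg Heis.y h'
      · have e1 := congrArg Heis.z h
        have e2 := congrArg Heis.z h'
        push_cast
        exact congrArg₂ (fun r r' : ℝ => r - r') e1 e2
    choose hx hy hz using hint
    choose fx hfx using hx
    choose fy hfy using hy
    choose fz hfz using hz
    have ci : ∀ (F : HeisG1 p q ⧸ HeisD p q → ℝ) (f : L → ℤ), Continuous F →
        (∀ w : L, F w = f w) → Continuous f := by
      intro F f hF hf
      rw [Int.isClosedEmbedding_coe_real.isEmbedding.continuous_iff]
      have : (fun n : ℤ => (n : ℝ)) ∘ f = fun w : L => F w := by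
        funext w; exact (hf w).symm
      rw [this]
      exact hF.comp continuous_subtype_val
    refine DiscreteTopology.of_continuous_injective (β := ℤ × ℤ × ℤ)
      (f := fun w : L => (fx w, fy w, fz w))
      ((ci X fx cX hfx).prodMk ((ci Y fy cY hfy).prodMk (ci Z fz cZ hfz))) ?_
    intro w w' hww
    simp only [Prod.mk.injEq] at hww
    obtain ⟨i1, i2, i3⟩ := hww
    have e1 : X w = X w' := by rw [hfx, hfx, i1]
    have e2 : Y w = Y w' := by rw [hfy, hfy, i2]
    have e3 : Z w = Z w' := by rw [hfz, hfz, i3]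
    clear i1 i2 i3
    obtain ⟨_, a, ha, rfl⟩ := w
    obtain ⟨_, b, hb, rfl⟩ := w'
    simp only [hX, hY, hZ] at e1 e2 e3
    apply Subtype.ext
    change (QuotientGroup.mk a : HeisG1 p q ⧸ HeisD p q) = QuotientGroup.mk b
    rw [QuotientGroup.eq]
    obtain ⟨s, t, u, v, rfl⟩ := paramG1_surj p q hp.ne_zero hq.ne_zero a
    obtain ⟨s', t', u', v', rfl⟩ := paramG1_surj p q hp.ne_zero hq.ne_zero b
    simp only [paramG1] at e1 e2 e3
    have e1' := mul_left_cancel₀ hq0 e1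
    have e2' := mul_left_cancel₀ hq0 e2
    have e3' : u - v = u' - v' := e3
    subst e1' e2'
    refine ⟨?_, ?_, ?_, ?_, ?_⟩ <;> simp [paramG1, Heis.mul_def, Heis.inv_def] <;> linarith
  · set L := Subgroup.map (QuotientGroup.mk' (HeisD p q))
        (((Heis.latt 1).prod (Heis.latt 1)).subgroupOf (HeisG1 p q)) with hL
    let ψ : ℝ × ℝ × ℝ × ℝ → (HeisG1 p q ⧸ HeisD p q) ⧸ L := fun w =>
      QuotientGroup.mk (QuotientGroup.mk (paramG1 p q w.1 w.2.1 w.2.2.1 w.2.2.2))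
    have cψ : Continuous ψ :=
      continuous_quot_mk.comp (continuous_quot_mk.comp (continuous_paramG1 p q))
    have hI : IsCompact (Set.Icc (0 : ℝ) 1) := isCompact_Icc
    have hK := (hI.prod (hI.prod (hI.prod hI))).image cψ
    refine ⟨?_⟩
    convert hK using 1
    symm
    rw [Set.eq_univ_iff_forall]
    intro w
    obtain ⟨w, rfl⟩ := QuotientGroup.mk_surjective w
    obtain ⟨g, rfl⟩ := QuotientGroup.mk_surjective w
    obtain ⟨s, t, u, v, rfl⟩ := paramG1_surj p q hp.ne_zero hq.ne_zero g
    obtain ⟨γ, hγ, s', hs, t', ht, u', hu, v', hv, e⟩ := paramG1_reduce p q s t u v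
    refine ⟨(s', t', u', v'), ⟨hs, ht, hu, hv⟩, ?_⟩
    simp only [ψ]
    rw [← e]
    symm
    rw [QuotientGroup.eq]
    refine ⟨γ, hγ, ?_⟩
    simp
end
end

section
/- Let p > q be distinct primes and G₁ = {(x₁,y₁,z₁,x₂,y₂,z₂) ∈ G×G : q·x₁ = p·x₂ and q·y₁ = p·y₂}. The map π : G₁ → G∗ defined by π(px, py, z₁, qx, qy, z₂) = (x, y, z₁ − z₂) (i.e. π(u₁,v₁,z₁,u₂,v₂,z₂) = (u₁/p, v₁/p, z₁−z₂)) is a surjective continuous group homomorphism from G₁ onto G∗ whose kernel is D = {(0,0,z,0,0,z) : z ∈ ℝ}; moreover π maps Γ₁ = G₁ ∩ (Γ×Γ) onto the subgroup Γ∗ of integer points of G∗. -/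
set_option linter.unreachableTactic false
set_option linter.unusedTactic false

noncomputable section
open Filter

/-- The underlying function of the projection `π : G₁ → G∗`,
`π(u₁,v₁,z₁,u₂,v₂,z₂) = (u₁/p, v₁/p, z₁−z₂)`; here `G∗ = Heis (p²−q²)`. -/
def piFun (p q : ℕ) : HeisG1 p q → Heis ((p : ℤ) ^ 2 - (q : ℤ) ^ 2) := fun g =>
  ⟨(g : Heis 1 × Heis 1).1.x / p, (g : Heis 1 × Heis 1).1.y / p,
    (g : Heis 1 × Heis 1).1.z - (g : Heis 1 × Heis 1).2.z⟩

/-- Coordinates of an element of `G₁`. -/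
lemma HeisG1_coords {p q : ℕ} (hp : p.Prime) (g : HeisG1 p q) :
    ∃ x y z w : ℝ, (g : Heis 1 × Heis 1) = (⟨p * x, p * y, z⟩, ⟨q * x, q * y, w⟩) := by
  obtain ⟨⟨⟨a, b, z⟩, ⟨a', b', w⟩⟩, h1, h2⟩ := g
  have hp0 : (p : ℝ) ≠ 0 := by exact_mod_cast hp.ne_zero
  simp only at h1 h2
  refine ⟨a / p, b / p, z, w, ?_⟩
  have e1 : (p : ℝ) * (a / p) = a := by field_simp
  have e2 : (p : ℝ) * (b / p) = b := by field_simp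
  have e3 : (q : ℝ) * (a / p) = a' := by field_simp; linarith
  have e4 : (q : ℝ) * (b / p) = b' := by field_simp; linarith
  rw [e1, e2, e3, e4]

lemma piFun_mul {p q : ℕ} (hp : p.Prime) (g h : HeisG1 p q) :
    piFun p q (g * h) = piFun p q g * piFun p q h := by
  have hp0 : (p : ℝ) ≠ 0 := by exact_mod_cast hp.ne_zero
  obtain ⟨x, y, z, w, hg⟩ := HeisG1_coords hp g
  obtain ⟨x', y', z', w', hh⟩ := HeisG1_coords hp h
  ext <;> simp only [piFun, Subgroup.coe_mul, hg, hh, Heis.mul_def, Prod.mk_mul_mk] <;>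
    push_cast <;> field_simp <;> ring

lemma Heis_continuous_coords {c : ℤ} :
    Continuous (fun a : Heis c => (a.x, a.y, a.z)) := continuous_induced_dom

lemma piFun_continuous (p q : ℕ) : Continuous (piFun p q) := by
  have h1 : Continuous fun g : HeisG1 p q =>
      ((g : Heis 1 × Heis 1).1.x, (g : Heis 1 × Heis 1).1.y, (g : Heis 1 × Heis 1).1.z) :=
    Heis_continuous_coords.comp (continuous_fst.comp continuous_subtype_val)
  have h2 : Continuous fun g : HeisG1 p q =>
      ((g : Heis 1 × Heis 1).2.x, (g : Heis 1 × Heis 1).2.y, (g : Heis 1 × Heis 1).2.z) :=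
    Heis_continuous_coords.comp (continuous_snd.comp continuous_subtype_val)
  refine continuous_induced_rng.2 ?_
  exact (h1.fst.div_const _).prodMk ((h1.snd.fst.div_const _).prodMk (h1.snd.snd.sub h2.snd.snd))

/-- A section of `π`. -/
def piSec (p q : ℕ) (x y z : ℝ) : HeisG1 p q :=
  ⟨(⟨p * x, p * y, z⟩, ⟨q * x, q * y, 0⟩), by constructor <;> simp only <;> ring⟩

lemma piFun_piSec {p q : ℕ} (hp : p.Prime) (x y z : ℝ) :
    piFun p q (piSec p q x y z) = ⟨x, y, z⟩ := by
  have hp0 : (p : ℝ) ≠ 0 := by exact_mod_cast hp.ne_zero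
  ext <;> simp [piFun, piSec, hp0]

lemma int_div_aux {p q : ℕ} (hp : p.Prime) (hq : q.Prime) (hpq : q < p) (m m' : ℤ)
    (h : (q : ℝ) * m = p * m') : ∃ k : ℤ, (m : ℝ) / p = k := by
  have hp0 : (p : ℝ) ≠ 0 := by exact_mod_cast hp.ne_zero
  have h' : (q : ℤ) * m = p * m' := by exact_mod_cast h
  have hc : IsCoprime (p : ℤ) (q : ℤ) :=
    Nat.isCoprime_iff_coprime.2 ((Nat.coprime_primes hp hq).2 hpq.ne')
  obtain ⟨k, rfl⟩ := hc.dvd_of_dvd_mul_left ⟨m', h'⟩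
  exact ⟨k, by push_cast; field_simp⟩

/-- The map `π(px,py,z₁,qx,qy,z₂) = (x,y,z₁−z₂)` is a surjective
continuous group homomorphism from `G₁` onto `G∗` with kernel
`D = {(0,0,z,0,0,z) : z ∈ ℝ}`, and `π` maps `Γ₁ = G₁ ∩ (Γ×Γ)` onto the subgroup `Γ∗` of
integer points of `G∗`. -/
theorem stmt6 (p q : ℕ) (hp : p.Prime) (hq : q.Prime) (hpq : q < p) :
    ∃ φ : HeisG1 p q →* Heis ((p : ℤ) ^ 2 - (q : ℤ) ^ 2),
      ⇑φ = piFun p q ∧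
      Continuous φ ∧
      Function.Surjective φ ∧
      φ.ker = HeisD p q ∧
      Subgroup.map φ (((Heis.latt 1).prod (Heis.latt 1)).subgroupOf (HeisG1 p q)) =
        Heis.latt ((p : ℤ) ^ 2 - (q : ℤ) ^ 2) := by
  refine ⟨MonoidHom.mk' (piFun p q) (piFun_mul hp), rfl, piFun_continuous p q, ?_, ?_, ?_⟩
  · rintro ⟨x, y, z⟩
    exact ⟨piSec p q x y z, piFun_piSec hp x y z⟩
  · have hp0 : (p : ℝ) ≠ 0 := by exact_mod_cast hp.ne_zero
    ext g
    obtain ⟨x, y, z, w, hg⟩ := HeisG1_coords hp g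
    rw [MonoidHom.mem_ker]
    change piFun p q g = 1 ↔ _ ∧ _ ∧ _ ∧ _ ∧ _
    have hq0 : (q : ℝ) ≠ 0 := by exact_mod_cast hq.ne_zero
    rw [Heis.ext_iff]
    simp [piFun, hg, Heis.one_def, hp0, hq0, sub_eq_zero]
    tauto
  · ext a
    constructor
    · rintro ⟨⟨⟨u, v⟩, h1, h2⟩, ⟨⟨m, n, k, hu⟩, ⟨m', n', k', hv⟩⟩, rfl⟩
      simp only [Subgroup.subtype_apply] at hu hv
      subst hu hv
      obtain ⟨i, hi⟩ := int_div_aux hp hq hpq m m' h1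
      obtain ⟨j, hj⟩ := int_div_aux hp hq hpq n n' h2
      refine ⟨i, j, k - k', ?_⟩
      change piFun p q _ = _
      ext <;> simp [piFun, hi, hj]
    · rintro ⟨m, n, k, rfl⟩
      refine ⟨piSec p q m n k, ⟨⟨p * m, p * n, k, ?_⟩, ⟨q * m, q * n, 0, ?_⟩⟩,
        piFun_piSec hp _ _ _⟩ <;> simp [piSec]
end
end
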